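/- Let T be a 3-graph such that: (i) T contains no subgraph isomorphic to K4⁻; (ii) there is no homomorphism from F* to T; and (iii) the shadow ∂T is complete, i.e., every pair of distinct vertices of T is contained in some edge of T. Then there is no homomorphism from F5 to T. -/

import Mathlib

open scoped Classical

/-- A collection of finite edge sets is a 3-graph if every edge has exactly 3 vertices. -/
def IsThreeGraph {α : Type*} (H : Set (Finset α)) : Prop := ∀ e ∈ H, e.card = 3

/-- `φ` is a homomorphism of 3-graphs from `G` to `H`: the image of every edge of `G`
is a 3-element set that is an edge of `H`. -/
def IsHomOn {α β : Type*} (G : Set (Finset α)) (H : Set (Finset β)) (φ : α → β) : Prop :=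
  ∀ e ∈ G, (e.image φ).card = 3 ∧ e.image φ ∈ H

/-- `H` contains a subgraph isomorphic to `G`. -/
def ContainsCopy {α β : Type*} (G : Set (Finset α)) (H : Set (Finset β)) : Prop :=
  ∃ φ : α → β, Function.Injective φ ∧ ∀ e ∈ G, e.image φ ∈ H

/-- `K4⁻`, on vertices `a=0, b=1, c=2, d=3`, with edges `abc, abd, acd`. -/
def K4minus : Set (Finset (Fin 4)) := {{0,1,2}, {0,1,3}, {0,2,3}}

/-- `F*`, on vertices `1,…,7` (represented by `0,…,6`), with edges `123, 124, 345, 156, 257`. -/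
def Fstar : Set (Finset (Fin 7)) := {{0,1,2}, {0,1,3}, {2,3,4}, {0,4,5}, {1,4,6}}

/-- The categorical product of two 3-graphs: a 3-element set of pairs is an edge iff
its set of first coordinates is an edge of `G` and its set of second coordinates is an
edge of `H`. -/
def ProdGraph {α β : Type*} (G : Set (Finset α)) (H : Set (Finset β)) :
    Set (Finset (α × β)) :=
  {e | e.card = 3 ∧ e.image Prod.fst ∈ G ∧ e.image Prod.snd ∈ H}

/-- The 3-graph `F := K4⁻ × F*`. -/
def F : Set (Finset (Fin 4 × Fin 7)) := ProdGraph K4minus Fstar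

/-- The generalized triangle `F₅`, on vertices `1,…,5` (represented by `0,…,4`),
with edges `123, 124, 345`. -/
def F5 : Set (Finset (Fin 5)) := {{0,1,2}, {0,1,3}, {2,3,4}}

/-!
Let `abc`, `abd`, `cde` be the images in `T` of the edges of `F₅`. If `e = a`, then `abc`, `abd`,
`acd` form a `K4⁻` with apex `a`, and if `e = b` there is likewise one with apex `b`. Otherwise
completeness of the shadow extends the pairs `ae` and `be` to edges `aex` and `bey`, and these five
edges form a homomorphic image of `F*`.
-/

section Homomorphisms

variable {α β : Type*} {G : Set (Finset α)} {H : Set (Finset β)} {φ : α → β}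

theorem IsThreeGraph.isHomOn_iff (hH : IsThreeGraph H) :
    IsHomOn G H φ ↔ ∀ e ∈ G, e.image φ ∈ H :=
  forall₂_congr fun _ _ => and_iff_right_of_imp (hH _)

theorem IsHomOn.injOn (hφ : IsHomOn G H φ) (hG : IsThreeGraph G) {e : Finset α} (he : e ∈ G) :
    Set.InjOn φ e :=
  Finset.card_image_iff.mp ((hφ e he).1.trans (hG e he).symm)

/-- The shadow of `H` is the complete graph: any two distinct vertices lie in a common edge.
The vertex set of `H` is taken to be the whole type `α`. -/
def HasCompleteShadow (H : Set (Finset α)) : Prop :=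
  ∀ x y : α, x ≠ y → ∃ e ∈ H, x ∈ e ∧ y ∈ e

theorem HasCompleteShadow.exists_triple_mem (hsh : HasCompleteShadow G) (hG : IsThreeGraph G)
    {x y : α} (hxy : x ≠ y) : ∃ z, {x, y, z} ∈ G := by
  obtain ⟨e, he, hx, hy⟩ := hsh x y hxy
  have hy' : y ∈ e.erase x := Finset.mem_erase.mpr ⟨hxy.symm, hy⟩
  have hcard : ((e.erase x).erase y).card = 1 := by
    rw [Finset.card_erase_of_mem hy', Finset.card_erase_of_mem hx, hG e he]
  obtain ⟨z, hz⟩ := Finset.card_eq_one.mp hcard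
  exact ⟨z, by rwa [← hz, Finset.insert_erase hy', Finset.insert_erase hx]⟩

theorem IsHomOn.injective (hφ : IsHomOn G H φ) (hG : IsThreeGraph G)
    (hsh : HasCompleteShadow G) : Function.Injective φ := by
  intro x y hxy
  by_contra hne
  obtain ⟨e, he, hx, hy⟩ := hsh x y hne
  exact hne (hφ.injOn hG he hx hy hxy)

theorem IsHomOn.containsCopy (hφ : IsHomOn G H φ) (hG : IsThreeGraph G)
    (hsh : HasCompleteShadow G) : ContainsCopy G H :=
  ⟨φ, hφ.injective hG hsh, fun e he => (hφ e he).2⟩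

end Homomorphisms

theorem isThreeGraph_K4minus : IsThreeGraph K4minus := by
  rintro e (rfl | rfl | rfl) <;> rfl

theorem hasCompleteShadow_K4minus : HasCompleteShadow K4minus := by
  simp only [HasCompleteShadow, K4minus, Set.exists_mem_insert, Set.mem_singleton_iff,
    exists_eq_left]
  decide

section Target

variable {α : Type*} {T : Set (Finset α)}

theorem IsThreeGraph.isHomOn_K4minus_iff (hT : IsThreeGraph T) {φ : Fin 4 → α} :
    IsHomOn K4minus T φ ↔
      {φ 0, φ 1, φ 2} ∈ T ∧ {φ 0, φ 1, φ 3} ∈ T ∧ {φ 0, φ 2, φ 3} ∈ T := by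
  simp [hT.isHomOn_iff, K4minus, Finset.image_insert]

theorem IsThreeGraph.isHomOn_Fstar_iff (hT : IsThreeGraph T) {φ : Fin 7 → α} :
    IsHomOn Fstar T φ ↔
      {φ 0, φ 1, φ 2} ∈ T ∧ {φ 0, φ 1, φ 3} ∈ T ∧ {φ 2, φ 3, φ 4} ∈ T ∧
        {φ 0, φ 4, φ 5} ∈ T ∧ {φ 1, φ 4, φ 6} ∈ T := by
  simp [hT.isHomOn_iff, Fstar, Finset.image_insert]

theorem IsThreeGraph.isHomOn_F5_iff (hT : IsThreeGraph T) {φ : Fin 5 → α} :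
    IsHomOn F5 T φ ↔
      {φ 0, φ 1, φ 2} ∈ T ∧ {φ 0, φ 1, φ 3} ∈ T ∧ {φ 2, φ 3, φ 4} ∈ T := by
  simp [hT.isHomOn_iff, F5, Finset.image_insert]

theorem IsThreeGraph.containsCopy_K4minus (hT : IsThreeGraph T) {a b c d : α}
    (habc : {a, b, c} ∈ T) (habd : {a, b, d} ∈ T) (hacd : {a, c, d} ∈ T) :
    ContainsCopy K4minus T :=
  have hφ : IsHomOn K4minus T ![a, b, c, d] := hT.isHomOn_K4minus_iff.mpr ⟨habc, habd, hacd⟩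
  hφ.containsCopy isThreeGraph_K4minus hasCompleteShadow_K4minus

theorem no_hom_F5_general (hT : IsThreeGraph T) (hK4 : ¬ ContainsCopy K4minus T)
    (hFstar : ¬ ∃ φ : Fin 7 → α, IsHomOn Fstar T φ) (hsh : HasCompleteShadow T) :
    ¬ ∃ φ : Fin 5 → α, IsHomOn F5 T φ := by
  rintro ⟨φ, hφ⟩
  obtain ⟨h012, h013, h234⟩ := hT.isHomOn_F5_iff.mp hφ
  have h102 : {φ 1, φ 0, φ 2} ∈ T := by rwa [Finset.insert_comm]
  have h103 : {φ 1, φ 0, φ 3} ∈ T := by rwa [Finset.insert_comm]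
  have h423 : {φ 4, φ 2, φ 3} ∈ T := by rwa [Finset.insert_comm, Finset.pair_comm (φ 4)]
  have h04 : φ 0 ≠ φ 4 := fun h => hK4 (hT.containsCopy_K4minus h012 h013 (h ▸ h423))
  have h14 : φ 1 ≠ φ 4 := fun h => hK4 (hT.containsCopy_K4minus h102 h103 (h ▸ h423))
  obtain ⟨x, h04x⟩ := hsh.exists_triple_mem hT h04
  obtain ⟨y, h14y⟩ := hsh.exists_triple_mem hT h14
  exact hFstar ⟨![φ 0, φ 1, φ 2, φ 3, φ 4, x, y],
    hT.isHomOn_Fstar_iff.mpr ⟨h012, h013, h234, h04x, h14y⟩⟩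

end Target

/-- If a 3-graph `T` (on vertex set `α`) contains no copy of `K4⁻`, admits no
homomorphism from `F*`, and has complete shadow, then it admits no homomorphism
from `F₅`. -/
theorem no_hom_F5 (α : Type) (T : Set (Finset α)) (h3 : IsThreeGraph T)
    (hK4 : ¬ ContainsCopy K4minus T)
    (hFstar : ¬ ∃ φ : Fin 7 → α, IsHomOn Fstar T φ)
    (hshadow : ∀ x y : α, x ≠ y → ∃ e ∈ T, x ∈ e ∧ y ∈ e) :
    ¬ ∃ φ : Fin 5 → α, IsHomOn F5 T φ :=
  no_hom_F5_general h3 hK4 hFstar hshadow
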